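/- Let p, q, k, s be integers with 2 ≤ q < p and k, s > 0. Then the braid (σ_1⋯σ_{p−1})^{q+k}(σ_1⋯σ_{q−1})^{qs} in B_p is Markov equivalent to the braid (σ_1⋯σ_{p+qs−1})^{q}(σ_1⋯σ_{p−1})^{k} in B_{p+qs}; that is, the K-link K((p, q+k),(q, qs)) is equal to the K-link K((p+qs, q),(p, k)). -/

import Mathlib

/-!
The torus part `(σ_1 ⋯ σ_{p+qs-1})^q` is destabilized one strand at a time. Writing `δ_n` for
`σ_1 ⋯ σ_{n-1}`, one has `δ_{n+1}^q = δ_n^q (σ_n σ_{n-1} ⋯ σ_{n-q+1})` for `q ≤ n`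
(`upWord_pow_split`). With `d_n = σ_{n-1} ⋯ σ_{n-q+1}`, the factor `σ_n ⋯ σ_{n-q+1} = σ_n d_n`
conjugates `d_{n+1}` to `d_n`, so for `β ∈ B_n`

  `δ_{n+1}^q d_{n+1}^a β = δ_n^q d_n^a σ_n d_n β`,

in which `σ_n` occurs once; removing it gives `δ_n^q d_n^{a+1} β` (`markov_step`). Iterating,
`δ_{p+m}^q β` is Markov equivalent to `δ_p^q d_p^m β` for every `m` and every `β` that is a power
of `δ_p` (`markov_iterate`).

For `m = qs` the factor `d_p^{qs}` is `s` full twists on the last `q` strands. Conjugating by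
`δ_p^{p-q}` moves it to the first `q` strands, where `(σ_{q-1} ⋯ σ_1)^q = (σ_1 ⋯ σ_{q-1})^q`
(`fullTwist_eq`) and a cyclic permutation of the resulting word gives the other side.
-/

/-- The braid relations on `n` generators `σ_1, …, σ_n` (generator `i : Fin n`
represents `σ_{i+1}`). -/
def braidRels (n : ℕ) : Set (FreeGroup (Fin n)) :=
  { r | (∃ i j : Fin n, (i : ℕ) + 1 = j ∧
          r = FreeGroup.of i * FreeGroup.of j * FreeGroup.of i *
              (FreeGroup.of j * FreeGroup.of i * FreeGroup.of j)⁻¹) ∨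
        (∃ i j : Fin n, (i : ℕ) + 2 ≤ j ∧
          r = FreeGroup.of i * FreeGroup.of j * (FreeGroup.of j * FreeGroup.of i)⁻¹) }

/-- The braid group `B_n` on `n` strands, presented by generators
`σ_1, …, σ_{n-1}` and the braid relations. -/
def BraidGroup (n : ℕ) : Type := PresentedGroup (braidRels (n - 1))

instance (n : ℕ) : Group (BraidGroup n) := by unfold BraidGroup; infer_instance

/-- The generator `σ_i` of `B_n` (defined for `1 ≤ i ≤ n - 1`, junk value `1` otherwise). -/
def σ (n i : ℕ) : BraidGroup n :=
  if h : 1 ≤ i ∧ i < n then PresentedGroup.of (⟨i - 1, by omega⟩ : Fin (n - 1)) else 1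

lemma braidRels_map {m n : ℕ} (h : m ≤ n) {r : FreeGroup (Fin m)} (hr : r ∈ braidRels m) :
    FreeGroup.map (Fin.castLE h) r ∈ braidRels n := by
  rcases hr with ⟨i, j, hij, rfl⟩ | ⟨i, j, hij, rfl⟩
  · exact Or.inl ⟨Fin.castLE h i, Fin.castLE h j, by simpa using hij,
      by simp [map_mul, map_inv, FreeGroup.map.of]⟩
  · exact Or.inr ⟨Fin.castLE h i, Fin.castLE h j, by simpa using hij,
      by simp [map_mul, map_inv, FreeGroup.map.of]⟩

/-- The inclusion homomorphism `ι : B_m → B_n` for `m ≤ n`, sending `σ_i` to `σ_i`. -/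
def braidInclude {m n : ℕ} (h : m ≤ n) : BraidGroup m →* BraidGroup n :=
  PresentedGroup.toGroup
    (f := fun i => (PresentedGroup.of (Fin.castLE (Nat.sub_le_sub_right h 1) i) :
      PresentedGroup (braidRels (n - 1))))
    (by
      intro r hr
      have key : (FreeGroup.lift fun i =>
            (PresentedGroup.of (Fin.castLE (Nat.sub_le_sub_right h 1) i) :
              PresentedGroup (braidRels (n - 1)))) =
          (PresentedGroup.mk (braidRels (n - 1))).comp
            (FreeGroup.map (Fin.castLE (Nat.sub_le_sub_right h 1))) := by
        apply FreeGroup.ext_hom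
        intro a
        simp [PresentedGroup.of, FreeGroup.map.of]
      rw [key]
      simp only [MonoidHom.comp_apply]
      have hmem : FreeGroup.map (Fin.castLE (Nat.sub_le_sub_right h 1)) r ∈
          braidRels (n - 1) := braidRels_map _ hr
      exact (QuotientGroup.eq_one_iff _).2 (Subgroup.subset_normalClosure hmem))

/-- The word `σ_lo σ_{lo+1} ⋯ σ_hi` in `B_n`. -/
def ascFrom (n lo hi : ℕ) : BraidGroup n :=
  ((List.range (hi + 1 - lo)).map fun i => σ n (lo + i)).prod

/-- The word `σ_1 σ_2 ⋯ σ_r` in `B_n`. -/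
def asc (n r : ℕ) : BraidGroup n := ascFrom n 1 r

/-- The word `(σ_1⋯σ_top)(σ_1⋯σ_{top-1})⋯(σ_1⋯σ_bot)` in `B_n`. -/
def descWord (n top bot : ℕ) : BraidGroup n :=
  ((List.range (top + 1 - bot)).map fun i => asc n (top - i)).prod

/-- The positive half-twist word `Δ_n = (σ_1⋯σ_{n-1})(σ_1⋯σ_{n-2})⋯(σ_1σ_2)(σ_1)` in `B_n`. -/
def halfTwist (n : ℕ) : BraidGroup n := descWord n (n - 1) 1

/-- The negative half-twist word
`N_n = (σ_{n-1}⁻¹⋯σ_1⁻¹)(σ_{n-1}⁻¹⋯σ_2⁻¹)⋯(σ_{n-1}⁻¹σ_{n-2}⁻¹)(σ_{n-1}⁻¹)` in `B_n`. -/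
def negHalfTwist (n : ℕ) : BraidGroup n :=
  ((List.range (n - 1)).map fun i => (ascFrom n (i + 1) (n - 1))⁻¹).prod

/-- One elementary Markov move on the disjoint union of the braid groups:
conjugation, or positive/negative stabilization. -/
inductive MarkovStep : ((n : ℕ) × BraidGroup n) → ((n : ℕ) × BraidGroup n) → Prop
  | conj {n : ℕ} (α β : BraidGroup n) : MarkovStep ⟨n, β⟩ ⟨n, α * β * α⁻¹⟩
  | stabPos {n : ℕ} (β : BraidGroup n) :
      MarkovStep ⟨n, β⟩ ⟨n + 1, braidInclude (Nat.le_succ n) β * σ (n + 1) n⟩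
  | stabNeg {n : ℕ} (β : BraidGroup n) :
      MarkovStep ⟨n, β⟩ ⟨n + 1, braidInclude (Nat.le_succ n) β * (σ (n + 1) n)⁻¹⟩

/-- Markov equivalence: the smallest equivalence relation generated by the Markov moves.
Two braids are Markov equivalent iff their closures are isotopic links. -/
def MarkovEquiv (x y : (n : ℕ) × BraidGroup n) : Prop :=
  Relation.EqvGen MarkovStep x y


/-! ### Words in a group carrying braid generators -/

/-- The elements `s 1, …, s (N - 1)` of `G` satisfy the braid relations of `B_N`; the other values
of `s` are irrelevant. -/
structure IsBraidSeq {G : Type*} [Group G] (s : ℕ → G) (N : ℕ) : Prop where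
  braid : ∀ i, 1 ≤ i → i + 1 < N → s i * s (i + 1) * s i = s (i + 1) * s i * s (i + 1)
  comm : ∀ i j, 1 ≤ i → i + 2 ≤ j → j < N → s i * s j = s j * s i

/-- The ascending word `s 1 * s 2 * ⋯ * s r`. -/
def upWord {G : Type*} [Group G] (s : ℕ → G) : ℕ → G
  | 0 => 1
  | r + 1 => upWord s r * s (r + 1)

/-- The descending word `s (b + l) * ⋯ * s (b + 2) * s (b + 1)` with `l` letters. -/
def downWord {G : Type*} [Group G] (s : ℕ → G) (b : ℕ) : ℕ → G
  | 0 => 1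
  | l + 1 => s (b + l + 1) * downWord s b l

section Words

variable {G : Type*} [Group G] {s : ℕ → G} {N : ℕ}

lemma upWord_comm (h : IsBraidSeq s N) {j : ℕ} (hj : j < N) :
    ∀ n, n + 2 ≤ j → upWord s n * s j = s j * upWord s n
  | 0, _ => by simp [upWord]
  | n + 1, hn => by
    rw [upWord, mul_assoc, h.comm (n + 1) j (by omega) hn hj, ← mul_assoc,
      upWord_comm h hj n (by omega), mul_assoc]

lemma downWord_comm (h : IsBraidSeq s N) (b : ℕ) {j : ℕ} (hj : j < N) :
    ∀ l, b + l + 2 ≤ j → downWord s b l * s j = s j * downWord s b l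
  | 0, _ => by simp [downWord]
  | l + 1, hl => by
    rw [downWord, mul_assoc, downWord_comm h b hj l (by omega), ← mul_assoc,
      h.comm (b + l + 1) j (by omega) (by omega) hj, mul_assoc]

/-- Conjugation by `s 1 * ⋯ * s n` raises indices by one. -/
lemma upWord_shift (h : IsBraidSeq s N) {i : ℕ} (hi : 1 ≤ i) :
    ∀ n, i < n → n < N → upWord s n * s i = s (i + 1) * upWord s n
  | 0, h0, _ => by omega
  | n + 1, hin, hn => by
    rcases Nat.lt_or_ge i n with hlt | hge
    · rw [upWord, mul_assoc, ← h.comm i (n + 1) hi (by omega) hn, ← mul_assoc,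
        upWord_shift h hi n hlt (by omega), mul_assoc]
    · obtain ⟨m, rfl⟩ : ∃ m, i = m + 1 := ⟨i - 1, by omega⟩
      obtain rfl : n = m + 1 := by omega
      have hb := h.braid (m + 1) (by omega) hn
      have hc := upWord_comm h hn m (by omega)
      simp only [upWord]
      calc upWord s m * s (m + 1) * s (m + 1 + 1) * s (m + 1)
          = upWord s m * (s (m + 1) * s (m + 1 + 1) * s (m + 1)) := by group
        _ = (upWord s m * s (m + 1 + 1)) * s (m + 1) * s (m + 1 + 1) := by rw [hb]; group
        _ = _ := by rw [hc]; group

/-- Conjugation by `s (b + l) * ⋯ * s (b + 1)` lowers indices by one. -/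
lemma downWord_shift (h : IsBraidSeq s N) {b j : ℕ} (hj : b + 1 ≤ j) :
    ∀ l, j + 1 ≤ b + l → b + l < N → downWord s b l * s (j + 1) = s j * downWord s b l
  | 0, h0, _ => by omega
  | l + 1, hl, hN => by
    rcases Nat.lt_or_ge j (b + l) with hlt | hge
    · rw [downWord, mul_assoc, downWord_shift h hj l (by omega) (by omega), ← mul_assoc,
        ← h.comm j (b + l + 1) (by omega) (by omega) hN, mul_assoc]
    · obtain ⟨m, rfl⟩ : ∃ m, l = m + 1 := ⟨l - 1, by omega⟩
      obtain rfl : j = b + m + 1 := by omega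
      have hb := h.braid (b + m + 1) (by omega) hN
      have hc := downWord_comm h b (j := b + m + 1 + 1) hN m (by omega)
      simp only [downWord, ← add_assoc]
      calc s (b + m + 1 + 1) * (s (b + m + 1) * downWord s b m) * s (b + m + 1 + 1)
          = s (b + m + 1 + 1) * s (b + m + 1) * (downWord s b m * s (b + m + 1 + 1)) := by group
        _ = (s (b + m + 1 + 1) * s (b + m + 1) * s (b + m + 1 + 1)) * downWord s b m := by
          rw [hc]; group
        _ = _ := by rw [← hb]; group

lemma upWord_mul_downWord (h : IsBraidSeq s N) {n b : ℕ} (hn : n < N) :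
    ∀ l, b + l < n → upWord s n * downWord s b l = downWord s (b + 1) l * upWord s n
  | 0, _ => by simp [downWord]
  | l + 1, hl => by
    rw [downWord, downWord, ← mul_assoc, upWord_shift h (by omega) n (by omega) hn, mul_assoc,
      upWord_mul_downWord h hn l (by omega), mul_assoc, show b + l + 1 + 1 = b + 1 + l + 1 by omega]

lemma upWord_pow_mul_downWord (h : IsBraidSeq s N) {n b l : ℕ} (hn : n < N) :
    ∀ c, b + c + l ≤ n →
      upWord s n ^ c * downWord s b l = downWord s (b + c) l * upWord s n ^ c
  | 0, _ => by simp
  | c + 1, hc => by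
    rw [pow_succ', mul_assoc, upWord_pow_mul_downWord h hn c (by omega), ← mul_assoc,
      upWord_mul_downWord h hn l (by omega), mul_assoc, ← add_assoc]

lemma downWord_mul_downWord (h : IsBraidSeq s N) {b m : ℕ} (hm : b + m < N) :
    ∀ l, l < m → downWord s b m * downWord s (b + 1) l = downWord s b l * downWord s b m
  | 0, _ => by simp [downWord]
  | l + 1, hl => by
    rw [downWord, downWord, ← mul_assoc, show b + 1 + l + 1 = b + l + 1 + 1 by omega,
      downWord_shift h (by omega) m (by omega) hm, mul_assoc,
      downWord_mul_downWord h hm l (by omega), mul_assoc]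

/-- Splitting off the last strand of a torus braid:
`(s 1 ⋯ s n) ^ q = (s 1 ⋯ s (n - 1)) ^ q * (s n ⋯ s (n - q + 1))`, where `n = b + q`. -/
lemma upWord_pow_split (h : IsBraidSeq s N) :
    ∀ q b, b + q < N → upWord s (b + q) ^ q = upWord s (b + q - 1) ^ q * downWord s b q
  | 0, b, _ => by simp [downWord]
  | q + 1, b, hN => by
    have ih := upWord_pow_split h q (b + 1) (by omega)
    rw [show b + 1 + q = b + q + 1 by omega, Nat.add_sub_cancel] at ih
    have hs := upWord_mul_downWord h (n := b + q + 1) (b := b) hN q (by omega)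
    rw [show b + (q + 1) = b + q + 1 by omega, Nat.add_sub_cancel, pow_succ, ih, mul_assoc, ← hs,
      pow_succ, upWord, downWord]
    group

lemma IsBraidSeq.op (h : IsBraidSeq s N) : IsBraidSeq (fun i => MulOpposite.op (s i)) N where
  braid i hi hN := by
    simp only [← MulOpposite.op_mul, ← mul_assoc]
    rw [h.braid i hi hN]
  comm i j hi hij hj := by
    simp only [← MulOpposite.op_mul]
    rw [h.comm i j hi hij hj]

lemma upWord_op (s : ℕ → G) :
    ∀ n, upWord (fun i => MulOpposite.op (s i)) n = MulOpposite.op (downWord s 0 n)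
  | 0 => rfl
  | n + 1 => by rw [upWord, upWord_op s n, downWord, MulOpposite.op_mul, zero_add]

lemma downWord_op (s : ℕ → G) :
    ∀ n, downWord (fun i => MulOpposite.op (s i)) 0 n = MulOpposite.op (upWord s n)
  | 0 => rfl
  | n + 1 => by rw [upWord, downWord, downWord_op s n, MulOpposite.op_mul, zero_add]

lemma upWord_comm_of_forall {x : G} :
    ∀ n, (∀ i, 1 ≤ i → i ≤ n → x * s i = s i * x) → x * upWord s n = upWord s n * x
  | 0, _ => by simp [upWord]
  | n + 1, hx => by
    rw [upWord, ← mul_assoc, upWord_comm_of_forall n fun i h1 h2 => hx i h1 (by omega), mul_assoc,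
      hx (n + 1) (by omega) le_rfl, mul_assoc]

/-- The full twist on `n + 1` strands is a power of the ascending word as well as of the descending
word. Both powers split as the full twist on `n` strands times the pure braid
`s n ⋯ s 1 * s 1 ⋯ s n`, which commutes with the braids on the first `n` strands. -/
lemma fullTwist_eq (h : IsBraidSeq s N) :
    ∀ n, n < N → upWord s n ^ (n + 1) = downWord s 0 n ^ (n + 1)
  | 0, _ => by simp [upWord, downWord]
  | n + 1, hN => by
    have ih := fullTwist_eq h n (by omega)
    have hup := upWord_pow_split h (n + 1) 0 (by omega)
    have hdown := upWord_pow_split h.op (n + 1) 0 (by omega)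
    simp only [zero_add, Nat.add_sub_cancel] at hup hdown
    rw [upWord_op, upWord_op, downWord_op, ← MulOpposite.op_pow, ← MulOpposite.op_pow,
      ← MulOpposite.op_mul] at hdown
    have hdown' := MulOpposite.op_injective hdown
    have hcomm : downWord s 0 (n + 1) * upWord s (n + 1) * upWord s n
        = upWord s n * (downWord s 0 (n + 1) * upWord s (n + 1)) := by
      apply upWord_comm_of_forall
      intro i h1 h2
      rw [mul_assoc, upWord_shift h h1 (n + 1) (by omega) hN, ← mul_assoc,
        downWord_shift h (by omega) (n + 1) (by omega) (by omega), mul_assoc]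
    have hcomm' : Commute (downWord s 0 (n + 1) * upWord s (n + 1)) (upWord s n ^ (n + 1)) :=
      Commute.pow_right hcomm _
    rw [pow_succ _ (n + 1), hup, pow_succ' _ (n + 1), hdown', ← ih, mul_assoc, ← hcomm'.eq,
      mul_assoc]

end Words

/-! ### The generators of the braid groups -/

lemma σ_eq_of {n i : ℕ} (hi : 1 ≤ i) (hn : i < n) :
    σ n i = (PresentedGroup.of (⟨i - 1, by omega⟩ : Fin (n - 1)) :
      PresentedGroup (braidRels (n - 1))) :=
  dif_pos ⟨hi, hn⟩

lemma isBraidSeq_σ (n : ℕ) : IsBraidSeq (σ n) n where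
  braid i hi hn := by
    rw [σ_eq_of hi (by omega), σ_eq_of (by omega) hn]
    have hr : FreeGroup.of (⟨i - 1, by omega⟩ : Fin (n - 1)) *
        FreeGroup.of (⟨i + 1 - 1, by omega⟩ : Fin (n - 1)) * FreeGroup.of ⟨i - 1, by omega⟩ *
        (FreeGroup.of ⟨i + 1 - 1, by omega⟩ * FreeGroup.of ⟨i - 1, by omega⟩ *
          FreeGroup.of ⟨i + 1 - 1, by omega⟩)⁻¹ ∈ braidRels (n - 1) :=
      Or.inl ⟨_, _, by simp only []; omega, rfl⟩
    exact mul_inv_eq_one.1 (PresentedGroup.one_of_mem hr)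
  comm i j hi hij hn := by
    rw [σ_eq_of hi (by omega), σ_eq_of (by omega) hn]
    have hr : FreeGroup.of (⟨i - 1, by omega⟩ : Fin (n - 1)) *
        FreeGroup.of (⟨j - 1, by omega⟩ : Fin (n - 1)) *
        (FreeGroup.of ⟨j - 1, by omega⟩ * FreeGroup.of ⟨i - 1, by omega⟩)⁻¹ ∈
          braidRels (n - 1) :=
      Or.inr ⟨_, _, by simp only []; omega, rfl⟩
    exact mul_inv_eq_one.1 (PresentedGroup.one_of_mem hr)

lemma asc_eq_upWord (n : ℕ) : ∀ r, asc n r = upWord (σ n) r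
  | 0 => by simp [asc, ascFrom, upWord]
  | r + 1 => by
    rw [upWord, ← asc_eq_upWord n r]
    simp [asc, ascFrom, List.range_succ, add_comm]

lemma braidInclude_σ {m n i : ℕ} (h : m ≤ n) (hi : 1 ≤ i) (him : i < m) :
    braidInclude h (σ m i) = σ n i := by
  rw [σ_eq_of hi him, σ_eq_of hi (by omega)]
  exact PresentedGroup.toGroup.of _

lemma braidInclude_upWord {m n : ℕ} (h : m ≤ n) :
    ∀ r, r < m → braidInclude h (upWord (σ m) r) = upWord (σ n) r
  | 0, _ => by simp [upWord]
  | r + 1, hr => by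
    rw [upWord, upWord, map_mul, braidInclude_upWord h r (by omega),
      braidInclude_σ h (by omega) hr]

lemma braidInclude_downWord {m n b : ℕ} (h : m ≤ n) :
    ∀ l, b + l < m → braidInclude h (downWord (σ m) b l) = downWord (σ n) b l
  | 0, _ => by simp [downWord]
  | l + 1, hl => by
    rw [downWord, downWord, map_mul, braidInclude_downWord h l (by omega),
      braidInclude_σ h (i := b + l + 1) (by omega) hl]

/-! ### Markov moves -/

lemma markov_comm {n : ℕ} (x y : BraidGroup n) : MarkovEquiv ⟨n, x * y⟩ ⟨n, y * x⟩ := by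
  have hstep := MarkovStep.conj y (x * y)
  rw [show y * (x * y) * y⁻¹ = y * x by group] at hstep
  exact Relation.EqvGen.rel _ _ hstep

/-- A braid meeting the last generator only once, positively, may be destabilized there. -/
lemma markov_destab {n : ℕ} (x y : BraidGroup n) :
    MarkovEquiv ⟨n + 1, braidInclude (Nat.le_succ n) x * σ (n + 1) n *
      braidInclude (Nat.le_succ n) y⟩ ⟨n, x * y⟩ := by
  refine Relation.EqvGen.trans _ _ _ (markov_comm _ _) ?_
  rw [← mul_assoc, ← map_mul]
  refine Relation.EqvGen.trans _ _ _
    (Relation.EqvGen.symm _ _ (Relation.EqvGen.rel _ _ (MarkovStep.stabPos (y * x)))) ?_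
  exact markov_comm _ _

/-- Removing one strand from the torus part `(σ_1 ⋯ σ_n) ^ (r + 1)`, where `n = b + r + 1`, at the
cost of one more turn `σ_{n-1} ⋯ σ_{n-r}` of the last `r + 1` of the remaining `n` strands. -/
lemma markov_step (b r a : ℕ) (β : BraidGroup (b + r + 1)) :
    MarkovEquiv
      ⟨b + r + 1 + 1, upWord (σ (b + r + 1 + 1)) (b + r + 1) ^ (r + 1) *
        downWord (σ (b + r + 1 + 1)) (b + 1) r ^ a * braidInclude (Nat.le_succ _) β⟩
      ⟨b + r + 1, upWord (σ (b + r + 1)) (b + r) ^ (r + 1) *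
        downWord (σ (b + r + 1)) b r ^ (a + 1) * β⟩ := by
  have h := isBraidSeq_σ (b + r + 1 + 1)
  have hsplit := upWord_pow_split h (r + 1) b (by omega)
  rw [← add_assoc, Nat.add_sub_cancel] at hsplit
  have hdd : SemiconjBy (downWord (σ (b + r + 1 + 1)) b (r + 1))
      (downWord (σ (b + r + 1 + 1)) (b + 1) r) (downWord (σ (b + r + 1 + 1)) b r) :=
    downWord_mul_downWord h (by omega) r (by omega)
  have hmove := (hdd.pow_right a).eq
  have hd := markov_destab (upWord (σ (b + r + 1)) (b + r) ^ (r + 1) *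
    downWord (σ (b + r + 1)) b r ^ a) (downWord (σ (b + r + 1)) b r * β)
  simp only [map_mul, map_pow] at hd
  rw [braidInclude_upWord _ _ (by omega), braidInclude_downWord _ _ (by omega)] at hd
  rw [hsplit, mul_assoc (upWord _ _ ^ _), hmove, downWord, pow_succ _ a]
  simpa only [mul_assoc] using hd

/-- Iterating `markov_step`: `m` strands of the torus part become `m` turns of a bundle of `r + 1`
strands. Here `p = b + r + 1`. -/
lemma markov_iterate (b r k : ℕ) : ∀ m a,
    MarkovEquiv
      ⟨b + r + 1 + m, upWord (σ (b + r + 1 + m)) (b + r + m) ^ (r + 1) *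
        downWord (σ (b + r + 1 + m)) (b + m) r ^ a * upWord (σ (b + r + 1 + m)) (b + r) ^ k⟩
      ⟨b + r + 1, upWord (σ (b + r + 1)) (b + r) ^ (r + 1) *
        downWord (σ (b + r + 1)) b r ^ (a + m) * upWord (σ (b + r + 1)) (b + r) ^ k⟩
  | 0, a => Relation.EqvGen.refl _
  | m + 1, a => by
    have ih := markov_iterate b r k m (a + 1)
    rw [show a + 1 + m = a + (m + 1) by omega] at ih
    refine Relation.EqvGen.trans _ _ _ ?_ ih
    have hs := markov_step (b + m) r a (upWord (σ (b + m + r + 1)) (b + r) ^ k)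
    rw [map_pow, braidInclude_upWord _ _ (by omega)] at hs
    rw [show b + r + 1 + (m + 1) = b + m + r + 1 + 1 by omega,
      show b + r + 1 + m = b + m + r + 1 by omega, show b + r + (m + 1) = b + m + r + 1 by omega,
      show b + r + m = b + m + r by omega, ← add_assoc b m 1]
    exact hs

/-- Proposition 2.4. For integers `p, q, k, s` with `2 ≤ q < p` and
`k, s > 0`, the braid `(σ_1⋯σ_{p−1})^{q+k}(σ_1⋯σ_{q−1})^{qs}` in `B_p` is Markov
equivalent to `(σ_1⋯σ_{p+qs−1})^{q}(σ_1⋯σ_{p−1})^{k}` in `B_{p+qs}`; that is, the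
K-link `K((p, q+k),(q, qs))` is equal to the K-link `K((p+qs, q),(p, k))`. -/
theorem klink_symmetry (p q k s : ℕ) (hq : 2 ≤ q) (hqp : q < p) (hk : 0 < k) (hs : 0 < s) :
    MarkovEquiv ⟨p, asc p (p - 1) ^ (q + k) * asc p (q - 1) ^ (q * s)⟩
      ⟨p + q * s, asc (p + q * s) (p + q * s - 1) ^ q * asc (p + q * s) (p - 1) ^ k⟩ := by
  obtain ⟨r, rfl⟩ : ∃ r, q = r + 1 := ⟨q - 1, by omega⟩
  obtain ⟨b, rfl⟩ : ∃ b, p = b + r + 1 := ⟨p - r - 1, by omega⟩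
  simp only [asc_eq_upWord, Nat.add_sub_cancel]
  rw [show b + r + 1 + (r + 1) * s - 1 = b + r + (r + 1) * s by omega]
  have hiter := markov_iterate b r k ((r + 1) * s) 0
  rw [pow_zero, mul_one, zero_add] at hiter
  refine Relation.EqvGen.trans _ _ _ ?_ (Relation.EqvGen.symm _ _ hiter)
  have h := isBraidSeq_σ (b + r + 1)
  -- `b = p - q` rotations carry the first `q` strands to the last `q` strands.
  have hrot : SemiconjBy (upWord (σ (b + r + 1)) (b + r) ^ b)
      (downWord (σ (b + r + 1)) 0 r) (downWord (σ (b + r + 1)) b r) := by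
    have hpow := upWord_pow_mul_downWord h (n := b + r) (b := 0) (l := r) (by omega) b (by omega)
    rwa [zero_add] at hpow
  have hrot' := hrot.pow_right ((r + 1) * s)
  rw [pow_mul (downWord _ 0 r), ← fullTwist_eq h r (by omega), ← pow_mul] at hrot'
  have hconj := eq_mul_inv_of_mul_eq hrot'.eq.symm
  rw [hconj]
  generalize upWord (σ (b + r + 1)) (b + r) = δ
  generalize upWord (σ (b + r + 1)) r ^ ((r + 1) * s) = τ
  have e₁ : δ ^ (r + 1) * (δ ^ b * τ * (δ ^ b)⁻¹) * δ ^ k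
      = (δ ^ (r + 1) * δ ^ b * τ) * ((δ ^ b)⁻¹ * δ ^ k) := by group
  have e₂ : δ ^ (r + 1 + k) * τ = ((δ ^ b)⁻¹ * δ ^ k) * (δ ^ (r + 1) * δ ^ b * τ) := by
    group
  rw [e₁, e₂]
  exact markov_comm _ _
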